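/- For any 1/2 < t < 1 and any real x ≥ 6·2^{1/(1−t)}, one has ∑_{n ≤ x} p_n^{-t} ≥ (7/20)·x^{1−t}/((1−t)(log x)^t), where the sum ranges over all positive integers n with n ≤ x. -/

import Mathlib

/-- The `n`-th prime number, 1-indexed: `nthPrime 1 = 2`, `nthPrime 2 = 3`, ... -/
noncomputable def nthPrime (n : ℕ) : ℕ := Nat.nth Nat.Prime (n - 1)

/-!
Chebyshev's bound `ψ(y) ≥ (y - 1) log 2 - log (y + 2)` gives `p_n ≤ 2 n log n` for `n ≥ 1000`, and
a sieve settles `3 ≤ n ≤ 1000`. Hence `p_n ≤ 2 n log x` for all `n ≤ x`, and the sum is at least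
`(2 log x)^{-t} ∑ n^{-t}`, where `∑ n^{-t} ≥ (x^{1-t} - 1) / (1 - t)`. For `t` near `1` and
`x^{1-t}` near `2` this only yields the constant `1/4`. The missing factor comes from the head
`n ≤ √x`, where `p_n ≤ 2 n log √x = n log x` makes every term larger by a factor `2^t`: with
`y = x^{(1-t)/2}` it remains to see that `(7/20) 2^t y² ≤ y² - 1 + (2^t - 1) (y - 1)`.
-/

open Finset Real
open scoped Nat

theorem nthPrime_pos (n : ℕ) : 0 < nthPrime n := (Nat.prime_nth_prime _).pos

theorem nthPrime_le_iff {n q : ℕ} (hn : 1 ≤ n) : nthPrime n ≤ q ↔ n ≤ q.primeCounting := by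
  rw [nthPrime, ← Nat.lt_succ_iff, ← Nat.lt_nth_iff_count_lt Nat.infinite_setOfPred_prime]
  change n - 1 < q.primeCounting ↔ _
  lia

theorem prime_iff_coprime_factorial {k n : ℕ} (hkn : k < n) (hn : n < (k + 1) ^ 2) :
    n.Prime ↔ n.Coprime (k !) := by
  refine ⟨fun h ↦ h.coprime_factorial_of_lt hkn, fun h ↦ ?_⟩
  have hn1 : n ≠ 1 := by rintro rfl; simp_all
  rw [Nat.coprime_factorial_iff hn1] at h
  by_contra hnp
  have := Nat.minFac_sq_le_self (by lia) hnp
  nlinarith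

theorem primeCounting_add_card_coprime_factorial {k a b : ℕ} (hka : k ≤ a) (hab : a ≤ b)
    (hb : b < (k + 1) ^ 2) :
    a.primeCounting + #{n ∈ Ioc a b | n.Coprime (k !)} = b.primeCounting := by
  have hsieve : {n ∈ Ioc a b | n.Coprime (k !)} = {n ∈ Ioc a b | n.Prime} :=
    filter_congr fun n hn ↦ by
      rw [mem_Ioc] at hn
      exact (prime_iff_coprime_factorial (by lia) (by lia)).symm
  simp only [hsieve, ← Nat.primesLE_card_eq_primeCounting, Nat.primesLE_eq_filter_Ioc_zero]
  rw [← Ioc_union_Ioc_eq_Ioc a.zero_le hab, filter_union, card_union_of_disjoint]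
  exact disjoint_filter_filter (Ioc_disjoint_Ioc_of_le le_rfl)

theorem le_log_two_pow_mul_three_pow_mul_five_pow (i j l : ℕ) :
    i * 0.6931 + j * 1.0986 + l * 1.6094 ≤ log (2 ^ i * 3 ^ j * 5 ^ l) := by
  rw [log_mul (by positivity) (by positivity), log_mul (by positivity) (by positivity),
    log_pow, log_pow, log_pow]
  gcongr
  · linarith [log_two_gt_d9]
  · linarith [log_three_gt_d9]
  · linarith [log_five_gt_d9]

theorem nthPrime_le_two_mul_log_of_smooth_le {n q i j l : ℕ} (hnq : n ≤ q.primeCounting)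
    (hn : 2 ^ i * 3 ^ j * 5 ^ l ≤ n)
    (hq : 5000 * q ≤ 2 ^ i * 3 ^ j * 5 ^ l * (6931 * i + 10986 * j + 16094 * l)) :
    (nthPrime n : ℝ) ≤ 2 * n * log n := by
  set a := 2 ^ i * 3 ^ j * 5 ^ l with ha
  have ha0 : 0 < a := by positivity
  have hlog := le_log_two_pow_mul_three_pow_mul_five_pow i j l
  have hlog_mono : log a ≤ log n := log_le_log (by positivity) (mod_cast hn)
  have ha' : (2 ^ i * 3 ^ j * 5 ^ l : ℝ) = a := by rw [ha]; push_cast; rfl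
  have hq' : 5000 * (q : ℝ) ≤ a * (6931 * i + 10986 * j + 16094 * l) := mod_cast hq
  rw [ha'] at hlog
  calc (nthPrime n : ℝ) ≤ q := mod_cast (nthPrime_le_iff (ha0.trans_le hn)).2 hnq
    _ ≤ 2 * a * (i * 0.6931 + j * 1.0986 + l * 1.6094) := by linarith
    _ ≤ 2 * n * log n := by gcongr; exact hlog.trans hlog_mono

/-- The state of the finite verification of `p_n ≤ 2 n log n`: the bound is known for all
`3 ≤ n ≤ b`, and there are at least `b` primes up to `q`, which is what the next stretch of the
sieve starts from. -/
def NthPrimeBoundUpTo (b q : ℕ) : Prop :=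
  b ≤ q.primeCounting ∧ ∀ n, 3 ≤ n → n ≤ b → (nthPrime n : ℝ) ≤ 2 * n * log n

-- For `b < n ≤ b'` the bound follows from `p_{b'} ≤ q' ≤ 2 a log a` with a single `a ≤ b + 1`,
-- taken `5`-smooth so that bounds on `log 2`, `log 3` and `log 5` suffice.
theorem NthPrimeBoundUpTo.step {b q : ℕ} (h : NthPrimeBoundUpTo b q) (k i j l : ℕ) {b' q' : ℕ}
    (hq : k ≤ q ∧ q ≤ q' ∧ q' < (k + 1) ^ 2)
    (hb : b' ≤ b + #{n ∈ Ioc q q' | n.Coprime (k !)})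
    (ha : 2 ^ i * 3 ^ j * 5 ^ l ≤ b + 1 ∧
      5000 * q' ≤ 2 ^ i * 3 ^ j * 5 ^ l * (6931 * i + 10986 * j + 16094 * l)) :
    NthPrimeBoundUpTo b' q' := by
  have hb' : b' ≤ q'.primeCounting := by
    have := primeCounting_add_card_coprime_factorial hq.1 hq.2.1 hq.2.2
    have := h.1
    lia
  refine ⟨hb', fun n hn3 hn ↦ ?_⟩
  obtain hnb | hbn := le_or_gt n b
  · exact h.2 n hn3 hnb
  · exact nthPrime_le_two_mul_log_of_smooth_le (hn.trans hb') (ha.1.trans hbn) ha.2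

theorem nthPrimeBoundUpTo_thousand : NthPrimeBoundUpTo 1000 7919 := by
  have h2 : NthPrimeBoundUpTo 2 3 := ⟨by decide +kernel, by lia⟩
  have h3 : NthPrimeBoundUpTo 3 5 := h2.step 3 0 1 0 (by decide) (by decide) (by decide)
  have h5 : NthPrimeBoundUpTo 5 11 := h3.step 3 2 0 0 (by decide) (by decide) (by decide)
  have h8 : NthPrimeBoundUpTo 8 19 := h5.step 4 1 1 0 (by decide) (by decide) (by decide)
  have h12 : NthPrimeBoundUpTo 12 37 := h8.step 6 0 2 0 (by decide) (by decide) (by decide)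
  have h17 : NthPrimeBoundUpTo 17 59 := h12.step 7 2 1 0 (by decide) (by decide) (by decide)
  have h27 : NthPrimeBoundUpTo 27 103 := h17.step 10 1 2 0 (by decide) (by decide) (by decide)
  have h40 : NthPrimeBoundUpTo 40 173 :=
    h27.step 13 0 3 0 (by decide) (by decide +kernel) (by decide)
  have h62 : NthPrimeBoundUpTo 62 293 :=
    h40.step 17 3 0 1 (by decide) (by decide +kernel) (by decide)
  have h94 : NthPrimeBoundUpTo 94 491 :=
    h62.step 22 2 1 1 (by decide) (by decide +kernel) (by decide)
  have h140 : NthPrimeBoundUpTo 140 809 :=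
    h94.step 28 1 2 1 (by decide) (by decide +kernel) (by decide)
  have h216 : NthPrimeBoundUpTo 216 1321 :=
    h140.step 36 0 3 1 (by decide) (by decide +kernel) (by decide)
  have h344 : NthPrimeBoundUpTo 344 2311 :=
    h216.step 48 3 3 0 (by decide) (by decide +kernel) (by decide)
  have h522 : NthPrimeBoundUpTo 522 3739 :=
    h344.step 61 2 4 0 (by decide) (by decide +kernel) (by decide)
  have h832 : NthPrimeBoundUpTo 832 6379 :=
    h522.step 79 9 0 0 (by decide) (by decide +kernel) (by decide)
  exact h832.step 88 1 4 1 (by decide) (by decide +kernel) (by decide)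

theorem nthPrime_le_two_mul_log_of_le_thousand {n : ℕ} (h3 : 3 ≤ n) (hn : n ≤ 1000) :
    (nthPrime n : ℝ) ≤ 2 * n * log n :=
  nthPrimeBoundUpTo_thousand.2 n h3 hn

theorem le_primeCounting_floor_of_log_le {n : ℕ} {y : ℝ} (hy : 1 < y)
    (h : n * log y + log (y + 2) ≤ (y - 1) * log 2) : n ≤ Nat.primeCounting ⌊y⌋₊ := by
  have hpsi := (Chebyshev.psi_ge' (by linarith)).trans (Chebyshev.psi_le_primeCounting_mul_log' y)
  have hmul : (n : ℝ) * log y ≤ Nat.primeCounting ⌊y⌋₊ * log y := by linarith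
  exact_mod_cast le_of_mul_le_mul_right hmul (log_pos hy)

theorem log_le_div_add_log_sub_one {a x : ℝ} (ha : 0 < a) (hx : 0 < x) :
    log x ≤ x / a + log a - 1 := by
  have h := log_le_sub_one_of_pos (div_pos hx ha)
  rw [log_div hx.ne' ha.ne'] at h
  linarith

theorem nthPrime_le_two_mul_log_of_thousand_le {n : ℕ} (hn : 1000 ≤ n) :
    (nthPrime n : ℝ) ≤ 2 * n * log n := by
  have hnR : (1000 : ℝ) ≤ n := mod_cast hn
  have hl : 6.9 ≤ log n := by
    have h1000 : log 1000 = 3 * log 2 + 3 * log 5 := by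
      rw [show (1000 : ℝ) = 2 ^ 3 * 5 ^ 3 by norm_num, log_mul (by norm_num) (by norm_num),
        log_pow, log_pow]
      norm_num
    linarith [log_le_log (by norm_num) hnR, log_two_gt_d9, log_five_gt_d9]
  set l := log n
  set y := 2 * n * l with hy
  have hy2 : 2 ≤ y := by nlinarith
  have hlogy : log y ≤ 9 / 8 * l + 4 * log 2 - 1 := by
    -- The tangent at `8` is a good one because `log 1000` is about `6.9`.
    have hlogl := log_le_div_add_log_sub_one (a := 2 ^ 3) (by norm_num) (show 0 < l by linarith)
    rw [log_pow, Nat.cast_ofNat] at hlogl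
    rw [hy, log_mul (by positivity) (by positivity), log_mul (by norm_num) (by positivity)]
    linarith
  have hlogy' : log (y + 2) ≤ log 2 + log y := by
    rw [← log_mul (by norm_num) (by positivity)]
    exact log_le_log (by positivity) (by linarith)
  have hcount : n ≤ Nat.primeCounting ⌊y⌋₊ := by
    refine le_primeCounting_floor_of_log_le (by linarith) ?_
    calc n * log y + log (y + 2) ≤ (n + 1) * log y + log 2 := by linarith
      _ ≤ (n + 1) * (9 / 8 * l + 1.7726) + log 2 := by gcongr; linarith [log_two_lt_d9]
      _ ≤ 2 * n * l * 0.69314 - log 2 := by nlinarith [log_two_lt_d9]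
      _ ≤ y * log 2 - log 2 := by rw [hy]; gcongr; linarith [log_two_gt_d9]
      _ = (y - 1) * log 2 := by ring
  exact (Nat.le_floor_iff (by positivity)).1 ((nthPrime_le_iff (by lia)).2 hcount)

theorem nthPrime_le_two_mul_log {n : ℕ} (hn : 3 ≤ n) : (nthPrime n : ℝ) ≤ 2 * n * log n :=
  (le_total n 1000).elim (nthPrime_le_two_mul_log_of_le_thousand hn)
    nthPrime_le_two_mul_log_of_thousand_le

theorem nthPrime_le_two_mul_log_of_exp_one_le {n : ℕ} {z : ℝ} (hn : 1 ≤ n) (hz : exp 1 ≤ z)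
    (hnz : n ≤ z) : (nthPrime n : ℝ) ≤ 2 * n * log z := by
  have hlog : 1 ≤ log z := (le_log_iff_exp_le ((exp_pos 1).trans_le hz)).2 hz
  obtain h3 | h3 := le_or_gt 3 n
  · calc (nthPrime n : ℝ) ≤ 2 * n * log n := nthPrime_le_two_mul_log h3
      _ ≤ 2 * n * log z := by gcongr
  · interval_cases n
    · have : nthPrime 1 = 2 := Nat.nth_prime_zero_eq_two
      rw [this]
      push_cast
      linarith
    · have : nthPrime 2 = 3 := Nat.nth_prime_one_eq_three
      rw [this]
      push_cast
      linarith

theorem rpow_sub_one_div_le_sum_rpow_neg {t z : ℝ} (ht : 0 ≤ t) (ht1 : t ≠ 1) (hz : 1 ≤ z) :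
    (z ^ (1 - t) - 1) / (1 - t) ≤ ∑ n ∈ Icc 1 ⌊z⌋₊, (n : ℝ) ^ (-t) := by
  have hanti : AntitoneOn (fun u : ℝ ↦ u ^ (-t)) (Set.Icc (1 : ℕ) (⌊z⌋₊ + 1 : ℕ)) :=
    (antitoneOn_rpow_Ioi_of_exponent_nonpos (by linarith)).mono fun u hu ↦
      one_pos.trans_le (Nat.cast_one.ge.trans hu.1)
  have hfloor : ((1 : ℕ) : ℝ) ≤ (⌊z⌋₊ + 1 : ℕ) := Nat.cast_le.2 (Nat.le_add_left 1 _)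
  have hz' : z ≤ (⌊z⌋₊ + 1 : ℕ) := mod_cast (Nat.lt_floor_add_one z).le
  have h0 : (0 : ℝ) ∉ Set.uIcc 1 z := Set.notMem_uIcc_of_lt one_pos (by linarith)
  calc (z ^ (1 - t) - 1) / (1 - t) = ∫ u in 1..z, u ^ (-t) := by
        rw [integral_rpow (.inr ⟨by rwa [ne_eq, neg_inj], h0⟩), one_rpow, neg_add_eq_sub]
    _ ≤ ∫ u in ((1 : ℕ) : ℝ)..(⌊z⌋₊ + 1 : ℕ), u ^ (-t) := by
        refine intervalIntegral.integral_mono_interval Nat.cast_one.le hz hz' ?_ ?_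
        · refine (MeasureTheory.ae_restrict_iff' measurableSet_Ioc).2 (.of_forall fun u hu ↦ ?_)
          exact rpow_nonneg (Nat.cast_nonneg 1 |>.trans hu.1.le) _
        · exact AntitoneOn.intervalIntegrable (by rwa [Set.uIcc_of_le hfloor])
    _ ≤ ∑ n ∈ Ico 1 (⌊z⌋₊ + 1), (n : ℝ) ^ (-t) :=
        AntitoneOn.integral_le_sum_Ico (Nat.le_add_left 1 _) hanti
    _ = ∑ n ∈ Icc 1 ⌊z⌋₊, (n : ℝ) ^ (-t) := by rw [Ico_add_one_right_eq_Icc]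

theorem mul_sum_rpow_neg_le_sum_nthPrime_rpow_neg {t z : ℝ} (ht : 0 ≤ t) (hz : exp 1 ≤ z)
    {s : Finset ℕ} (hs : s ⊆ Icc 1 ⌊z⌋₊) :
    (2 * log z) ^ (-t) * ∑ n ∈ s, (n : ℝ) ^ (-t) ≤ ∑ n ∈ s, (nthPrime n : ℝ) ^ (-t) := by
  have hz0 : 0 < z := (exp_pos 1).trans_le hz
  have hlog : 0 < log z := one_pos.trans_le ((le_log_iff_exp_le hz0).2 hz)
  rw [mul_sum]
  refine sum_le_sum fun n hn ↦ ?_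
  obtain ⟨hn1, hnz⟩ := mem_Icc.1 (hs hn)
  have hp := nthPrime_le_two_mul_log_of_exp_one_le hn1 hz ((Nat.le_floor_iff hz0.le).1 hnz)
  rw [← mul_rpow (by positivity) (by positivity)]
  exact rpow_le_rpow_of_nonpos (mod_cast nthPrime_pos n) (by linarith) (by linarith)

theorem mul_sum_add_sum_sqrt_le_sum_nthPrime_rpow_neg {t x : ℝ} (ht : 0 ≤ t) (hx : exp 2 ≤ x) :
    (2 * log x) ^ (-t) * (∑ n ∈ Icc 1 ⌊x⌋₊, (n : ℝ) ^ (-t) +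
      (2 ^ t - 1) * ∑ n ∈ Icc 1 ⌊√x⌋₊, (n : ℝ) ^ (-t)) ≤
      ∑ n ∈ Icc 1 ⌊x⌋₊, (nthPrime n : ℝ) ^ (-t) := by
  have hsqrt : exp 1 ≤ √x := le_sqrt_of_sq_le (by rwa [← exp_nat_mul, Nat.cast_ofNat, mul_one])
  have hx1 : 1 ≤ x := (one_le_exp zero_le_two).trans hx
  have hexp : exp 1 ≤ x := (exp_le_exp.2 one_le_two).trans hx
  have hle : ⌊√x⌋₊ ≤ ⌊x⌋₊ := Nat.floor_mono (sqrt_le_iff.2 ⟨by linarith, by nlinarith⟩)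
  have hsplit (f : ℕ → ℝ) : ∑ n ∈ Icc 1 ⌊x⌋₊, f n =
      ∑ n ∈ Icc 1 ⌊√x⌋₊, f n + ∑ n ∈ Ioc ⌊√x⌋₊ ⌊x⌋₊, f n := by
    have hIcc (m : ℕ) : Icc 1 m = Ioc 0 m := Icc_add_one_left_eq_Ioc 0 m
    rw [hIcc, hIcc]
    exact (sum_Ioc_consecutive f (Nat.zero_le _) hle).symm
  have hhead := mul_sum_rpow_neg_le_sum_nthPrime_rpow_neg ht hsqrt Subset.rfl
  have hsub : Ioc ⌊√x⌋₊ ⌊x⌋₊ ⊆ Icc 1 ⌊x⌋₊ := fun n hn ↦ by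
    rw [mem_Ioc] at hn
    exact mem_Icc.2 (by lia)
  have htail := mul_sum_rpow_neg_le_sum_nthPrime_rpow_neg ht hexp hsub
  have hlog : (2 * log √x) ^ (-t) = (2 * log x) ^ (-t) * 2 ^ t := by
    rw [log_sqrt (by linarith), mul_div_cancel₀ _ two_ne_zero,
      mul_rpow zero_le_two (log_nonneg hx1), rpow_neg zero_le_two]
    field_simp
  rw [hlog] at hhead
  rw [hsplit, hsplit]
  linarith

theorem seven_twentieths_mul_sq_mul_le {c y : ℝ} (hc : c ≤ 2) (hy : 0 ≤ y) (hy2 : 2 ≤ y ^ 2) :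
    7 / 20 * y ^ 2 * c ≤ y ^ 2 - 1 + (c - 1) * (y - 1) := by
  -- The difference of the two sides is affine and decreasing in `c`, so `c = 2` is the worst case.
  have hquad : 0 ≤ 7 / 20 * y ^ 2 - y + 1 := by nlinarith [sq_nonneg (7 * y - 10)]
  have hy' : 1.4 ≤ y := by nlinarith
  nlinarith [mul_nonneg (sub_nonneg.2 hc) hquad]

theorem sum_reciprocal_prime_powers_lower_bound'_general
    {t x : ℝ} (ht₀ : 0 ≤ t) (ht₁ : t < 1) (hx : exp 2 ≤ x) (hxt : 2 ≤ x ^ (1 - t)) :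
    7 / 20 * (x ^ (1 - t) / ((1 - t) * log x ^ t)) ≤
      ∑ n ∈ Icc 1 ⌊x⌋₊, (nthPrime n : ℝ) ^ (-t) := by
  have hs : 0 < 1 - t := by linarith
  have hx1 : 1 < x := (one_lt_exp_iff.2 two_pos).trans_le hx
  have hL : 0 < log x := log_pos hx1
  have hc1 : 1 ≤ (2 : ℝ) ^ t := one_le_rpow one_le_two ht₀
  have hc2 : (2 : ℝ) ^ t ≤ 2 := rpow_le_self_of_one_le one_le_two ht₁.le
  set y := √x ^ (1 - t) with hy
  have hxy : x ^ (1 - t) = y ^ 2 := by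
    rw [hy, rpow_pow_comm (sqrt_nonneg x), sq_sqrt (by linarith)]
  calc 7 / 20 * (x ^ (1 - t) / ((1 - t) * log x ^ t))
      = (2 * log x) ^ (-t) * (7 / 20 * y ^ 2 * 2 ^ t / (1 - t)) := by
        rw [rpow_neg (by positivity), mul_rpow zero_le_two hL.le, hxy]
        field_simp
    _ ≤ (2 * log x) ^ (-t) * ((x ^ (1 - t) - 1 + (2 ^ t - 1) * (y - 1)) / (1 - t)) := by
        gcongr
        rw [hxy]
        exact seven_twentieths_mul_sq_mul_le hc2 (by positivity) (hxy ▸ hxt)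
    _ = (2 * log x) ^ (-t) * ((x ^ (1 - t) - 1) / (1 - t) +
          (2 ^ t - 1) * ((y - 1) / (1 - t))) := by ring
    _ ≤ (2 * log x) ^ (-t) * (∑ n ∈ Icc 1 ⌊x⌋₊, (n : ℝ) ^ (-t) +
          (2 ^ t - 1) * ∑ n ∈ Icc 1 ⌊√x⌋₊, (n : ℝ) ^ (-t)) := by
        gcongr
        · exact rpow_sub_one_div_le_sum_rpow_neg ht₀ ht₁.ne hx1.le
        · exact rpow_sub_one_div_le_sum_rpow_neg ht₀ ht₁.ne (one_le_sqrt.2 hx1.le)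
    _ ≤ _ := mul_sum_add_sum_sqrt_le_sum_nthPrime_rpow_neg ht₀ hx

theorem sum_reciprocal_prime_powers_lower_bound'
    (t x : ℝ) (ht₁ : 1 / 2 < t) (ht₂ : t < 1)
    (hx : 6 * (2 : ℝ) ^ (1 / (1 - t)) ≤ x) :
    7 / 20 * (x ^ (1 - t) / ((1 - t) * Real.log x ^ t)) ≤
      ∑ n ∈ Finset.Icc 1 ⌊x⌋₊, (nthPrime n : ℝ) ^ (-t) := by
  have hs : 0 < 1 - t := by linarith
  have hpow : (2 : ℝ) ≤ 2 ^ (1 / (1 - t)) :=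
    self_le_rpow_of_one_le one_le_two ((one_le_div hs).2 (by linarith))
  have hexp : exp 2 ≤ 3 ^ 2 := by
    rw [← mul_one 2, ← Nat.cast_ofNat, exp_nat_mul]
    gcongr
    exact exp_one_lt_three.le
  refine sum_reciprocal_prime_powers_lower_bound'_general (by linarith) ht₂ (by linarith) ?_
  rw [← rpow_inv_le_iff_of_pos, inv_eq_one_div]
  all_goals linarith
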